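/- Let n ≥ 1, let β : [0, ∞) × ℝⁿ → ℝⁿ be a bounded continuous map, and fix s ≥ 0. For k = 0, 1, 2, … let w_k : [0, ∞) → ℝⁿ be continuous and v_k : [0, ∞) → ℝ be continuous and nondecreasing, and suppose that w_k → w₀ and v_k → v₀ locally uniformly on [0, ∞) as k → ∞. Then the functions t ↦ ∫_{(s, t]} β(r, w_k(r)) dλ_{v_k}(r) converge, locally uniformly in t ∈ [s, ∞), to the function t ↦ ∫_{(s, t]} β(r, w₀(r)) dλ_{v₀}(r) as k → ∞, where λ_v denotes the Lebesgue–Stieltjes measure associated with a nondecreasing right-continuous function v. -/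

import Mathlib

open MeasureTheory Filter Topology

/-- Comparison of a Stieltjes integral with a Riemann–Stieltjes sum. -/
lemma stieltjes_riemann_sum_bound {E : Type*} [NormedAddCommGroup E] [NormedSpace ℝ E]
    [CompleteSpace E] (V : StieltjesFunction ℝ) (f : ℝ → E) (hf : Continuous f)
    (c : ℕ → E) (x : ℕ → ℝ) (hx : Monotone x) (N : ℕ) (T t ε : ℝ)
    (ht : x 0 ≤ t) (htT : t ≤ T) (hN : t ≤ x N)
    (h : ∀ i r, r ∈ Set.Ioc (x i) (x (i + 1)) → r ≤ T → ‖f r - c i‖ ≤ ε) :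
    ‖(∫ r in Set.Ioc (x 0) t, f r ∂V.measure) -
      ∑ i ∈ Finset.range N, (V (min t (x (i + 1))) - V (min t (x i))) • c i‖
      ≤ ε * (V t - V (x 0)) := by
  have hmono : ∀ i, min t (x i) ≤ min t (x (i + 1)) := fun i =>
    min_le_min le_rfl (hx (Nat.le_succ i))
  have hsum := intervalIntegral.sum_integral_adjacent_intervals (μ := V.measure) (f := f)
    (a := fun i => min t (x i)) (n := N) (fun k _ => hf.intervalIntegrable _ _)
  have h0 : min t (x 0) = x 0 := min_eq_right ht
  have hN' : min t (x N) = t := min_eq_left hN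
  simp only [h0, hN'] at hsum
  rw [intervalIntegral.integral_of_le ht] at hsum
  have htel : ∑ i ∈ Finset.range N, (V (min t (x (i + 1))) - V (min t (x i)))
      = V t - V (x 0) := by
    rw [Finset.sum_range_sub (fun i => V (min t (x i))), h0, hN']
  rw [← hsum, ← Finset.sum_sub_distrib, ← htel, Finset.mul_sum]
  refine (norm_sum_le _ _).trans (Finset.sum_le_sum fun i _ => ?_)
  have hV : 0 ≤ V (min t (x (i + 1))) - V (min t (x i)) := sub_nonneg.2 (V.mono (hmono i))
  have hreal : V.measure.real (Set.Ioc (min t (x i)) (min t (x (i + 1))))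
      = V (min t (x (i + 1))) - V (min t (x i)) := by
    rw [measureReal_def, V.measure_Ioc, ENNReal.toReal_ofReal hV]
  have hfin : V.measure (Set.Ioc (min t (x i)) (min t (x (i + 1)))) < ⊤ := by
    rw [V.measure_Ioc]; exact ENNReal.ofReal_lt_top
  rw [intervalIntegral.integral_of_le (hmono i), ← hreal, ← setIntegral_const,
    ← integral_sub]
  · apply norm_setIntegral_le_of_norm_le_const hfin
    intro r hr
    have h1 : r ≤ t := hr.2.trans (min_le_left _ _)
    refine h i r ⟨?_, hr.2.trans (min_le_right _ _)⟩ (h1.trans htT)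
    rcases min_lt_iff.1 hr.1 with h2 | h2
    · exact absurd h2 (not_lt.2 h1)
    · exact h2
  · exact (hf.intervalIntegrable _ _).1
  · exact integrableOn_const hfin.ne

/-- **Continuity of Stieltjes integrals under locally uniform convergence.**
Let `n ≥ 1`, let `β : [0, ∞) × ℝⁿ → ℝⁿ` be bounded and continuous, and let
`s ≥ 0`.  For `k = 0, 1, 2, …` let `wₖ : [0, ∞) → ℝⁿ` be continuous and
`vₖ : [0, ∞) → ℝ` be continuous and nondecreasing (extended to `ℝ`, so that
`vₖ` is a Stieltjes function with Lebesgue–Stieltjes measure `λ_{vₖ}`), and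
suppose `wₖ → w₀` and `vₖ → v₀` locally uniformly as `k → ∞`.  Then
`t ↦ ∫_{(s, t]} β(r, wₖ(r)) dλ_{vₖ}(r)` converges locally uniformly on
`[s, ∞)` to `t ↦ ∫_{(s, t]} β(r, w₀(r)) dλ_{v₀}(r)` as `k → ∞`. -/
theorem stieltjes_integral_tendstoLocallyUniformly
    (n : ℕ) (hn : 1 ≤ n)
    (β : ℝ → EuclideanSpace ℝ (Fin n) → EuclideanSpace ℝ (Fin n))
    (hβc : Continuous fun p : ℝ × EuclideanSpace ℝ (Fin n) => β p.1 p.2)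
    (C : ℝ) (hβb : ∀ t x, ‖β t x‖ ≤ C)
    (s : ℝ) (hs : 0 ≤ s)
    (w : ℕ → ℝ → EuclideanSpace ℝ (Fin n))
    (v : ℕ → StieltjesFunction ℝ)
    (hw : ∀ k, Continuous (w k))
    (hv : ∀ k, Continuous (v k))
    (hwconv : TendstoLocallyUniformlyOn (fun k => w k) (w 0) atTop (Set.Ici 0))
    (hvconv : TendstoLocallyUniformlyOn (fun k => ((v k : ℝ → ℝ))) ((v 0 : ℝ → ℝ))
      atTop (Set.Ici 0)) :
    TendstoLocallyUniformlyOn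
      (fun k t => ∫ r in Set.Ioc s t, β r (w k r) ∂((v k).measure))
      (fun t => ∫ r in Set.Ioc s t, β r (w 0 r) ∂((v 0).measure))
      atTop (Set.Ici s) := by
  have hC : 0 ≤ C := (norm_nonneg _).trans (hβb 0 0)
  rw [Metric.tendstoLocallyUniformlyOn_iff]
  intro ε hε a ha
  set T := a + 1 with hT
  have hsT : s ≤ T := by have : s ≤ a := ha; linarith
  refine ⟨Set.Icc s T, ?_, ?_⟩
  · have : Set.Iio T ∈ 𝓝 a := Iio_mem_nhds (by linarith)
    filter_upwards [self_mem_nhdsWithin, mem_nhdsWithin_of_mem_nhds this] with y h1 h2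
    exact ⟨h1, le_of_lt h2⟩
  have hsub : Set.Icc s T ⊆ Set.Ici 0 := fun y hy => hs.trans hy.1
  have hw' := (tendstoLocallyUniformlyOn_iff_tendstoUniformlyOn_of_compact isCompact_Icc).1
    (hwconv.mono hsub)
  have hv' := (tendstoLocallyUniformlyOn_iff_tendstoUniformlyOn_of_compact isCompact_Icc).1
    (hvconv.mono hsub)
  rw [Metric.tendstoUniformlyOn_iff] at hw' hv'
  have hcont : ∀ k, Continuous fun r => β r (w k r) := fun k =>
    hβc.comp (continuous_id.prodMk (hw k))
  set M := v 0 T - v 0 s + 1 with hM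
  have hM1 : 1 ≤ M := by have := (v 0).mono hsT; linarith
  set e := ε / (8 * M) with he
  have he0 : 0 < e := by positivity
  have heM : e * M = ε / 8 := by rw [he]; field_simp
  -- uniform closeness of the integrands
  have hf : ∀ᶠ k in atTop, ∀ r ∈ Set.Icc s T, dist (β r (w 0 r)) (β r (w k r)) < e := by
    have hK : IsCompact ((fun r => (r, w 0 r)) '' Set.Icc s T) :=
      isCompact_Icc.image (continuous_id.prodMk (hw 0))
    have hu := hK.uniformContinuousAt_of_continuousAt
      (fun p : ℝ × EuclideanSpace ℝ (Fin n) => β p.1 p.2)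
      (fun p _ => hβc.continuousAt) (Metric.dist_mem_uniformity he0)
    obtain ⟨d, hd, hd'⟩ := Metric.mem_uniformity_dist.1 hu
    filter_upwards [hw' d hd] with k hk r hr
    have := @hd' (r, w 0 r) (r, w k r) (by simpa [Prod.dist_eq, hd] using hk r hr)
    exact this ⟨r, hr, rfl⟩
  -- uniform continuity of the limit integrand
  obtain ⟨d, hd, hd'⟩ := Metric.uniformContinuousOn_iff.1
    (isCompact_Icc.uniformContinuousOn_of_continuous (hcont 0).continuousOn :
      UniformContinuousOn (fun r => β r (w 0 r)) (Set.Icc s T)) e he0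
  set x : ℕ → ℝ := fun i => s + i * (d / 2) with hx
  have hx0 : x 0 = s := by simp [hx]
  have hxm : Monotone x := by
    intro i j hij
    have : (i : ℝ) ≤ j := by exact_mod_cast hij
    simp only [hx]; gcongr
  obtain ⟨N, hN⟩ := exists_nat_ge ((T - s) / (d / 2))
  have hTN : T ≤ x N := by
    rw [div_le_iff₀ (by positivity)] at hN
    simp only [hx]; linarith
  have happ : ∀ i r, r ∈ Set.Ioc (x i) (x (i + 1)) → r ≤ T →
      ‖β r (w 0 r) - β (x i) (w 0 (x i))‖ ≤ e := by
    intro i r hr hrT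
    have h1 : s ≤ x i := hx0 ▸ hxm (Nat.zero_le i)
    have h2 : x (i + 1) = x i + d / 2 := by simp only [hx]; push_cast; ring
    rw [← dist_eq_norm]
    refine (hd' r ⟨h1.trans hr.1.le, hrT⟩ (x i) ⟨h1, hr.1.le.trans hrT⟩ ?_).le
    rw [Real.dist_eq, abs_lt]
    constructor <;> linarith [hr.1, hr.2]
  set η := min (1 / 2) (ε / (8 * (N + 1) * (C + 1))) with hη
  have hη0 : 0 < η := by positivity
  have hη1 : η ≤ 1 / 2 := min_le_left _ _
  have hη2 : N * (2 * η * C) ≤ ε / 4 := by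
    have h1 : η * (8 * (N + 1) * (C + 1)) ≤ ε :=
      (le_div_iff₀ (by positivity)).1 (min_le_right _ _)
    have h2 : (N : ℝ) * C ≤ (N + 1) * (C + 1) := by nlinarith [Nat.cast_nonneg (α := ℝ) N]
    nlinarith
  filter_upwards [hf, hv' η hη0] with k hfk hvk t ht
  have hvk' : ∀ y ∈ Set.Icc s T, |v 0 y - v k y| ≤ η := fun y hy => by
    have := hvk y hy
    rw [Real.dist_eq] at this
    exact this.le
  have B0 := stieltjes_riemann_sum_bound (v 0) _ (hcont 0) (fun i => β (x i) (w 0 (x i))) x hxm N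
    T t e (hx0 ▸ ht.1) ht.2 (ht.2.trans hTN) happ
  have Bk := stieltjes_riemann_sum_bound (v k) _ (hcont k) (fun i => β (x i) (w 0 (x i))) x hxm N
    T t (2 * e) (hx0 ▸ ht.1) ht.2 (ht.2.trans hTN) (by
      intro i r hr hrT
      have h1 : s ≤ x i := hx0 ▸ hxm (Nat.zero_le i)
      have h2 := hfk r ⟨h1.trans hr.1.le, hrT⟩
      have h3 := happ i r hr hrT
      rw [← dist_eq_norm] at h3 ⊢
      have := dist_triangle_left (β r (w k r)) (β (x i) (w 0 (x i))) (β r (w 0 r))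
      linarith)
  rw [hx0] at B0 Bk
  have hS : ‖∑ i ∈ Finset.range N, (v 0 (min t (x (i + 1))) - v 0 (min t (x i))) •
        β (x i) (w 0 (x i)) -
      ∑ i ∈ Finset.range N, (v k (min t (x (i + 1))) - v k (min t (x i))) •
        β (x i) (w 0 (x i))‖ ≤ N * (2 * η * C) := by
    rw [← Finset.sum_sub_distrib]
    refine (norm_sum_le _ _).trans ?_
    have : ∀ i ∈ Finset.range N, ‖(v 0 (min t (x (i + 1))) - v 0 (min t (x i))) •
        β (x i) (w 0 (x i)) - (v k (min t (x (i + 1))) - v k (min t (x i))) •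
        β (x i) (w 0 (x i))‖ ≤ 2 * η * C := by
      intro i _
      rw [← sub_smul, norm_smul]
      have hm : ∀ j, min t (x j) ∈ Set.Icc s T := fun j =>
        ⟨le_min ht.1 (hx0 ▸ hxm (Nat.zero_le j)), (min_le_left _ _).trans ht.2⟩
      have a1 := abs_le.1 (hvk' _ (hm (i + 1)))
      have a2 := abs_le.1 (hvk' _ (hm i))
      refine mul_le_mul ?_ (hβb _ _) (norm_nonneg _) (by positivity)
      rw [Real.norm_eq_abs, abs_le]
      constructor <;> linarith [a1.1, a1.2, a2.1, a2.2]
    refine (Finset.sum_le_sum this).trans ?_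
    simp
  have m0 : e * (v 0 t - v 0 s) ≤ ε / 8 := by
    rw [← heM]
    have := (v 0).mono ht.2
    gcongr; linarith
  have mk : 2 * e * (v k t - v k s) ≤ ε / 4 := by
    have a1 := abs_le.1 (hvk' T ⟨hsT, le_rfl⟩)
    have a2 := abs_le.1 (hvk' s ⟨le_rfl, hsT⟩)
    have := (v k).mono ht.2
    have : v k t - v k s ≤ M := by linarith [a1.1, a1.2, a2.1, a2.2]
    have : e * (v k t - v k s) ≤ e * M := by gcongr
    linarith
  rw [dist_eq_norm]
  generalize (∫ r in Set.Ioc s t, β r (w 0 r) ∂(v 0).measure) = I0 at *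
  generalize (∫ r in Set.Ioc s t, β r (w k r) ∂(v k).measure) = Ik at *
  generalize (∑ i ∈ Finset.range N, (v 0 (min t (x (i + 1))) - v 0 (min t (x i))) •
        β (x i) (w 0 (x i))) = S0 at *
  generalize (∑ i ∈ Finset.range N, (v k (min t (x (i + 1))) - v k (min t (x i))) •
        β (x i) (w 0 (x i))) = Sk at *
  have e1 : I0 - Ik = (I0 - S0) + (S0 - Sk) - (Ik - Sk) := by abel
  rw [e1]
  have := norm_sub_le ((I0 - S0) + (S0 - Sk)) (Ik - Sk)
  have := norm_add_le (I0 - S0) (S0 - Sk)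
  linarith
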